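/- arXiv:2512.24920 — 2 statements merged into one kernel-verified Lean document; each statement's English description precedes it below -/
import Mathlib

section
/- Let R be a ring, a, b, w ∈ R with w central, F = a² + w·b, C = b·a − a·b, S_k = ∑_{i=0}^{k-1} F^i·C·F^{k-1-i}. Let τ : R → M be additive with τ(x·y) = τ(y·x). Then for all k ≥ 1, for any element e ∈ R: τ(e·a·F^k) = τ(e·F^k·a) − τ(w·e·S_k). -/
theorem bianchi_aux {R : Type*} [Ring R] (a F C w : R) (hw : ∀ r : R, w * r = r * w)
    (h : a * F = F * a - w * C) (k : ℕ) :
    a * F ^ k = F ^ k * a - w * ∑ i ∈ Finset.range k, F ^ i * C * F ^ (k - 1 - i) := by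
  induction k with
  | zero => simp
  | succ k ih =>
    have hS : ∑ i ∈ Finset.range (k + 1), F ^ i * C * F ^ (k + 1 - 1 - i)
        = (∑ i ∈ Finset.range k, F ^ i * C * F ^ (k - 1 - i)) * F + F ^ k * C := by
      rw [Finset.sum_range_succ, Finset.sum_mul]
      congr 1
      · refine Finset.sum_congr rfl fun i hi => ?_
        have hi' := Finset.mem_range.mp hi
        have : k + 1 - 1 - i = (k - 1 - i) + 1 := by omega
        simp only [this, pow_succ, mul_assoc]
      · simp
    rw [hS, pow_succ, ← mul_assoc, ih, sub_mul, mul_assoc (F ^ k) a F, h, mul_sub, mul_add,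
      ← mul_assoc (F ^ k) w C, ← hw (F ^ k)]
    simp only [mul_assoc]
    abel

theorem trace_transgression_first_component {R M : Type*} [Ring R] [AddCommGroup M]
    (τ : R →+ M) (hτ : ∀ x y : R, τ (x * y) = τ (y * x))
    (a b w : R) (hw : ∀ r : R, w * r = r * w) :
    ∀ k : ℕ, 1 ≤ k → ∀ e : R,
      τ (e * a * (a ^ 2 + w * b) ^ k) =
        τ (e * (a ^ 2 + w * b) ^ k * a) -
        τ (w * e * (∑ i ∈ Finset.range k,
          (a ^ 2 + w * b) ^ i * (b * a - a * b) * (a ^ 2 + w * b) ^ (k - 1 - i))) := by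
  intro k _ e
  have h : a * (a ^ 2 + w * b) = (a ^ 2 + w * b) * a - w * (b * a - a * b) := by
    have h1 : a * (w * b) = w * (a * b) := by rw [← mul_assoc, ← hw a, mul_assoc]
    rw [mul_add, h1]
    noncomm_ring
  rw [mul_assoc e a, bianchi_aux a _ _ w hw h k, mul_sub, map_sub, ← mul_assoc, ← mul_assoc e w,
    ← hw e]
end

section
/- Let R be a ring, a, b, w ∈ R with w central, F = a² + w·b, C = b·a − a·b, and S_k = ∑_{i=0}^{k-1} F^i·C·F^{k-1-i}. Assuming the induction hypotheses a·F^k − F^k·a + w·S_k = 0 and b·F^k − F^k·b − a·S_k − S_k·a = 0, one has S_{k+1} = S_k·F + F^k·C, and the identity a·F^{k+1} − F^{k+1}·a + w·S_{k+1} = 0 follows. -/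
theorem primitive_bianchi_inductive_step {R : Type*} [Ring R] (a b w : R)
    (hw : ∀ r : R, w * r = r * w) (k : ℕ)
    (IH1 : a * (a ^ 2 + w * b) ^ k - (a ^ 2 + w * b) ^ k * a +
      w * (∑ i ∈ Finset.range k,
        (a ^ 2 + w * b) ^ i * (b * a - a * b) * (a ^ 2 + w * b) ^ (k - 1 - i)) = 0)
    (IH2 : b * (a ^ 2 + w * b) ^ k - (a ^ 2 + w * b) ^ k * b -
      a * (∑ i ∈ Finset.range k,
        (a ^ 2 + w * b) ^ i * (b * a - a * b) * (a ^ 2 + w * b) ^ (k - 1 - i)) -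
      (∑ i ∈ Finset.range k,
        (a ^ 2 + w * b) ^ i * (b * a - a * b) * (a ^ 2 + w * b) ^ (k - 1 - i)) * a = 0) :
    (∑ i ∈ Finset.range (k + 1),
        (a ^ 2 + w * b) ^ i * (b * a - a * b) * (a ^ 2 + w * b) ^ (k - i)) =
      (∑ i ∈ Finset.range k,
        (a ^ 2 + w * b) ^ i * (b * a - a * b) * (a ^ 2 + w * b) ^ (k - 1 - i)) *
        (a ^ 2 + w * b) + (a ^ 2 + w * b) ^ k * (b * a - a * b) ∧
    a * (a ^ 2 + w * b) ^ (k + 1) - (a ^ 2 + w * b) ^ (k + 1) * a +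
      w * (∑ i ∈ Finset.range (k + 1),
        (a ^ 2 + w * b) ^ i * (b * a - a * b) * (a ^ 2 + w * b) ^ (k - i)) = 0 := by
  clear IH2
  have hF : a * (a ^ 2 + w * b) - (a ^ 2 + w * b) * a + w * (b * a - a * b) = 0 := by
    have h : a * (w * b) = w * (a * b) := by rw [← mul_assoc, ← hw a, mul_assoc]
    rw [mul_add, h]
    noncomm_ring
  generalize b * a - a * b = C at *
  generalize a ^ 2 + w * b = F at *
  have hS : (∑ i ∈ Finset.range (k + 1), F ^ i * C * F ^ (k - i)) =
      (∑ i ∈ Finset.range k, F ^ i * C * F ^ (k - 1 - i)) * F + F ^ k * C := by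
    rw [Finset.sum_range_succ, Finset.sum_mul, Nat.sub_self, pow_zero, mul_one]
    congr 1
    refine Finset.sum_congr rfl fun i hi => ?_
    have hi' := Finset.mem_range.mp hi
    have e : k - i = (k - 1 - i) + 1 := by omega
    rw [e, pow_succ, mul_assoc (F ^ i * C)]
  refine ⟨hS, ?_⟩
  rw [hS]
  generalize (∑ i ∈ Finset.range k, F ^ i * C * F ^ (k - 1 - i)) = S at *
  rw [pow_succ]
  generalize F ^ k = P at *
  have h : w * (P * C) = P * (w * C) := by rw [← mul_assoc, hw P, mul_assoc]
  calc a * (P * F) - P * F * a + w * (S * F + P * C)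
      = (a * P - P * a + w * S) * F + P * (a * F - F * a + w * C) := by
        rw [mul_add w, h]
        noncomm_ring
    _ = 0 := by rw [IH1, hF, zero_mul, mul_zero, add_zero]
end
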